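/- Let M > 0 and set X₀ = 2·(3/M)^{1/3}. Define V(X) = −6/(X₀ + |X|)² for X ∈ ℝ. Then V''(X) + V(X)² = 0 for all X ≠ 0, V(X) → 0 as X → ±∞, and the one-sided derivatives of V at 0 exist and satisfy lim_{X→0⁺} V'(X) − lim_{X→0⁻} V'(X) = M. -/

import Mathlib

open Filter

/-!
On a half-line, `-6 / (a + r) ^ 2` solves `u'' + u² = 0` and decays at infinity. Reflection
preserves the equation, because it involves only an even number of derivatives, so the even
extension still solves it away from the origin, while the slope `12 / a ^ 3` at `0⁺` changes sign:
the jump is `24 / a ^ 3`, and it equals `M` when `a = 2 * (3 / M) ^ (1 / 3)`.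
-/

section EvenExtension

variable {E : Type*} [NormedAddCommGroup E] [NormedSpace ℝ E]

lemma iteratedDeriv_comp_abs (n : ℕ) (f : ℝ → E) {x : ℝ} (hx : x ≠ 0) :
    iteratedDeriv n (fun y => f |y|) x = (SignType.sign x : ℝ) ^ n • iteratedDeriv n f |x| := by
  rcases hx.lt_or_gt with hneg | hpos
  · have heq : (fun y => f |y|) =ᶠ[nhds x] fun y => f (-y) := by
      filter_upwards [Iio_mem_nhds hneg] with y hy
      rw [abs_of_neg hy]
    rw [heq.iteratedDeriv_eq, iteratedDeriv_comp_neg, abs_of_neg hneg, sign_neg hneg,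
      SignType.coe_neg_one]
  · have heq : (fun y => f |y|) =ᶠ[nhds x] f := by
      filter_upwards [Ioi_mem_nhds hpos] with y hy
      rw [abs_of_pos hy]
    rw [heq.iteratedDeriv_eq, abs_of_pos hpos, sign_pos hpos, SignType.coe_one, one_pow, one_smul]

variable {f : ℝ → E} {f' : E}

lemma hasDerivWithinAt_comp_abs_Ici (hf : HasDerivWithinAt f f' (Set.Ici 0) 0) :
    HasDerivWithinAt (fun x => f |x|) f' (Set.Ici 0) 0 :=
  hf.congr (fun x hx => by rw [abs_of_nonneg hx]) (by rw [abs_zero])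

lemma hasDerivWithinAt_comp_abs_Iic (hf : HasDerivWithinAt f f' (Set.Ici 0) 0) :
    HasDerivWithinAt (fun x => f |x|) (-f') (Set.Iic 0) 0 := by
  have hcomp : HasDerivWithinAt (fun x => f (-x)) (-f') (Set.Iic 0) 0 := by
    have hneg : HasDerivWithinAt (fun x : ℝ => -x) (-1) (Set.Iic 0) 0 :=
      (hasDerivAt_neg 0).hasDerivWithinAt
    have hmaps : Set.MapsTo (fun x : ℝ => -x) (Set.Iic 0) (Set.Ici 0) :=
      fun x hx => Set.mem_Ici.mpr (neg_nonneg.mpr hx)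
    simpa only [Function.comp_def, neg_smul, one_smul] using
      hf.scomp_of_eq 0 hneg hmaps neg_zero.symm
  exact hcomp.congr (fun x hx => by rw [abs_of_nonpos hx]) (by rw [abs_zero, neg_zero])

end EvenExtension

section DecayingSolution

variable {𝕜 : Type*} [NontriviallyNormedField 𝕜]

lemma hasDerivAt_const_div_add_pow (c a : 𝕜) (n : ℕ) {r : 𝕜} (hr : a + r ≠ 0) :
    HasDerivAt (fun t => c / (a + t) ^ n) (-(n * c) / (a + r) ^ (n + 1)) r := by
  have hpow := (hasDerivAt_zpow (-n : ℤ) (a + r) (Or.inl hr)).comp_const_add a r |>.const_mul c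
  refine (hpow.congr_deriv ?_).congr_of_eventuallyEq (.of_forall fun t => ?_)
  · rw [show (-n : ℤ) - 1 = -((n + 1 : ℕ) : ℤ) by push_cast; ring, zpow_neg, zpow_natCast]
    push_cast
    ring
  · simp only [zpow_neg, zpow_natCast, div_eq_mul_inv]

/-- The explicit solution of `u'' + u ^ 2 = 0` away from its pole at `r = -a`, where division by
zero gives the junk value `0`. For real `a > 0` it is smooth on `[0, ∞)` and decays at infinity;
the outer profile is its even extension, `X ↦ decayingSolution X₀ |X|`. -/
def decayingSolution (a r : 𝕜) : 𝕜 := -6 / (a + r) ^ 2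

lemma hasDerivAt_decayingSolution (a : 𝕜) {r : 𝕜} (hr : a + r ≠ 0) :
    HasDerivAt (decayingSolution a) (12 / (a + r) ^ 3) r :=
  (hasDerivAt_const_div_add_pow (-6) a 2 hr).congr_deriv (by norm_num)

lemma iteratedDeriv_two_decayingSolution (a : 𝕜) {r : 𝕜} (hr : a + r ≠ 0) :
    iteratedDeriv 2 (decayingSolution a) r = -36 / (a + r) ^ 4 := by
  have hderiv : deriv (decayingSolution a) =ᶠ[nhds r] fun t => 12 / (a + t) ^ 3 := by
    filter_upwards [(continuous_const_add a).continuousAt.eventually_ne hr] with t ht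
    exact (hasDerivAt_decayingSolution a ht).deriv
  rw [iteratedDeriv_succ, iteratedDeriv_one, hderiv.deriv_eq,
    (hasDerivAt_const_div_add_pow 12 a 3 hr).deriv]
  norm_num

lemma iteratedDeriv_two_decayingSolution_add_sq (a : 𝕜) {r : 𝕜} (hr : a + r ≠ 0) :
    iteratedDeriv 2 (decayingSolution a) r + decayingSolution a r ^ 2 = 0 := by
  rw [iteratedDeriv_two_decayingSolution a hr, decayingSolution]
  field_simp
  norm_num

end DecayingSolution

lemma tendsto_decayingSolution_atTop (a : ℝ) : Tendsto (decayingSolution a) atTop (nhds 0) :=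
  ((tendsto_pow_atTop two_ne_zero).comp
    (tendsto_atTop_add_const_left _ a tendsto_id)).const_div_atTop _

lemma iteratedDeriv_two_decayingSolution_abs_add_sq {a x : ℝ} (hax : a + |x| ≠ 0) (hx : x ≠ 0) :
    iteratedDeriv 2 (fun y => decayingSolution a |y|) x + decayingSolution a |x| ^ 2 = 0 := by
  have hsign : (SignType.sign x : ℝ) ^ 2 = 1 := by
    rcases hx.lt_or_gt with h | h <;> simp [h]
  rw [iteratedDeriv_comp_abs 2 _ hx, hsign, one_smul,
    iteratedDeriv_two_decayingSolution_add_sq a hax]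

lemma two_mul_rpow_one_third_cube {y : ℝ} (hy : 0 ≤ y) : (2 * y ^ ((1 : ℝ) / 3)) ^ 3 = 8 * y := by
  have hcube : (y ^ ((1 : ℝ) / 3)) ^ 3 = y := by
    simpa only [one_div, Nat.cast_ofNat] using Real.rpow_inv_natCast_pow hy three_ne_zero
  rw [mul_pow, hcube]
  norm_num

/-- The outer limit profile at the termination point `α = 0` of branch `B₀`:
`V(X) = −6/(X₀ + |X|)²` with `X₀ = 2(3/M)^{1/3}` solves `V'' + V² = 0` away from `X = 0`,
decays at infinity, and its slope jumps by exactly the mass `M` across `X = 0`. -/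
theorem statement15 (M : ℝ) (hM : 0 < M) :
    let X₀ : ℝ := 2 * (3 / M) ^ ((1:ℝ)/3)
    let V : ℝ → ℝ := fun X => -6 / (X₀ + |X|) ^ 2
    (∀ X : ℝ, X ≠ 0 → deriv (deriv V) X + (V X) ^ 2 = 0) ∧
    Tendsto V atTop (nhds 0) ∧ Tendsto V atBot (nhds 0) ∧
    ∃ dplus dminus : ℝ,
      HasDerivWithinAt V dplus (Set.Ici 0) 0 ∧
      HasDerivWithinAt V dminus (Set.Iic 0) 0 ∧
      dplus - dminus = M := by
  intro X₀ V
  have hX₀ : 0 < X₀ + 0 := by positivity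
  have hcube : X₀ ^ 3 = 8 * (3 / M) := two_mul_rpow_one_third_cube (by positivity)
  have hode : ∀ X : ℝ, X ≠ 0 → deriv (deriv V) X + V X ^ 2 = 0 := fun X hX => by
    have h := iteratedDeriv_two_decayingSolution_abs_add_sq (by positivity : X₀ + |X| ≠ 0) hX
    rwa [iteratedDeriv_succ, iteratedDeriv_one] at h
  have hdecay : Tendsto (decayingSolution X₀) atTop (nhds 0) := tendsto_decayingSolution_atTop X₀
  have hslope : HasDerivWithinAt (decayingSolution X₀) (12 / X₀ ^ 3) (Set.Ici 0) 0 := by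
    simpa only [add_zero] using (hasDerivAt_decayingSolution X₀ hX₀.ne').hasDerivWithinAt
  have hjump : 12 / X₀ ^ 3 - -(12 / X₀ ^ 3) = M := by
    rw [hcube]
    field_simp
    norm_num
  exact ⟨hode, hdecay.comp tendsto_abs_atTop_atTop, hdecay.comp tendsto_abs_atBot_atTop,
    12 / X₀ ^ 3, -(12 / X₀ ^ 3), hasDerivWithinAt_comp_abs_Ici hslope,
    hasDerivWithinAt_comp_abs_Iic hslope, hjump⟩
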